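/- arXiv:2412.06123 — 4 statements merged into one kernel-verified Lean document; each statement's English description precedes it below -/
import Mathlib

section
/- Let F be a field, A a finite-dimensional associative unital F-algebra, and S a generating set of A with l(S) ≥ m(A). Then for every k with 1 ≤ k ≤ l(S) − 1 one has dim_F L_k(S) − dim_F L_{k−1}(S) ≥ 2; consequently dim_F A ≥ 2·l(S). -/
/-- `Lk F S k` is the `F`-linear span of all products of at most `k` elements of `S`
(the empty product `1` has length `0`); equivalently `V ^ k` with `V = span F ({1} ∪ S)`. -/
noncomputable def Lk (F : Type*) [Field F] {A : Type*} [Ring A] [Algebra F A]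
    (S : Set A) (k : ℕ) : Submodule F A :=
  (Submodule.span F ({1} ∪ S)) ^ k

/-- The length of a generating set `S`: the least `k` with `Lk F S k = ⊤`. -/
noncomputable def lenS (F : Type*) [Field F] {A : Type*} [Ring A] [Algebra F A]
    (S : Set A) : ℕ :=
  sInf {k | Lk F S k = ⊤}

/-- `mAlg F A` is the maximal degree over all `τ ∈ A` of the minimal polynomial of `τ`. -/
noncomputable def mAlg (F A : Type*) [Field F] [Ring A] [Algebra F A] : ℕ :=
  sSup {d | ∃ τ : A, d = (minpoly F τ).natDegree}

/-!
Write `V = span ({1} ∪ S)` and suppose that `dim V ^ (n + 1) ≤ dim V ^ n + 1` with `n + 1 < l(S)`.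
Then `V ^ (n + 1) = V ^ n + F u a` with `u ∈ V ^ n` and `a ∈ S`, and the last factor can be slid
through `V`: this gives `V ^ (n + 2) = V ^ (n + 1) + F u a ^ 2`. As the chain still grows there,
`u a ^ 2 ∉ V ^ (n + 1)`, so right multiplication by `a` is injective from `V ^ (n + 1) / V ^ n` to
`V ^ (n + 2) / V ^ (n + 1)`. If `a ^ (n + 1)` were in `V ^ n`, this cancellation would show
inductively that `V ^ i a ^ (n + 1 - i) ⊆ V ^ n` for `i ≤ n`, hence `u a ∈ V ^ n`, which is absurd.
So `a ^ (n + 1)` spans `V ^ (n + 1)` modulo `V ^ n`, and sliding again shows that `a ^ m` spans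
`V ^ m` modulo `V ^ (m - 1)` for all `m > n`. For `m = l(S)` this forces `a ^ m ∉ V ^ (m - 1)`,
although the minimal polynomial of `a` has degree at most `m`.
-/

section IdemSemiring

variable {α : Type*} [IdemSemiring α] {u v w : α} {m n : ℕ}

lemma pow_add_two_le_add_mul_mul (hu : u ≤ v ^ n) (hw : w ≤ v)
    (h : v ^ (n + 1) ≤ v ^ n + u * w) : v ^ (n + 2) ≤ v ^ (n + 1) + u * w * w :=
  calc v ^ (n + 2) = v * v ^ (n + 1) := pow_succ' ..
    _ ≤ v * (v ^ n + u * w) := by gcongr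
    _ = v ^ (n + 1) + v * u * w := by rw [mul_add, ← pow_succ', mul_assoc]
    _ ≤ v ^ (n + 1) + v * v ^ n * w := by gcongr
    _ ≤ v ^ (n + 1) + (v ^ n + u * w) * w := by rw [← pow_succ']; gcongr
    _ ≤ v ^ (n + 1) + (v ^ n * v + u * w * w) := by rw [add_mul]; gcongr
    _ = v ^ (n + 1) + u * w * w := by rw [← pow_succ, ← add_assoc, add_idem]

lemma pow_succ_le_add_pow_succ_of_le (hw : w ≤ v) (hnm : n ≤ m)
    (h : v ^ (n + 1) ≤ v ^ n + w ^ (n + 1)) : v ^ (m + 1) ≤ v ^ m + w ^ (m + 1) := by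
  induction m, hnm using Nat.le_induction with
  | base => exact h
  | succ m _ ih =>
    rw [pow_succ w m] at ih
    simpa only [← pow_succ] using pow_add_two_le_add_mul_mul (pow_le_pow_left' hw m) hw ih

end IdemSemiring

section Submodule

open Submodule

lemma exists_mul_notMem_of_not_mul_span_le {R A : Type*} [CommSemiring R] [Semiring A]
    [Algebra R A] {M N : Submodule R A} {T : Set A} (h : ¬ M * span R T ≤ N) :
    ∃ u ∈ M, ∃ a ∈ T, u * a ∉ N := by
  by_contra! hN
  apply h
  rw [← span_eq M, span_mul_span, span_le]
  exact Set.mul_subset_iff.2 hN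

lemma pow_mul_span_pow_succ_le_pow {R A : Type*} [CommSemiring R] [Semiring A] [Algebra R A]
    {V : Submodule R A} {a : A} {n : ℕ} (ha : a ∈ V)
    (cancel : ∀ x ∈ V ^ (n + 1), x * a ∈ V ^ (n + 1) → x ∈ V ^ n) (hpow : a ^ (n + 1) ∈ V ^ n)
    {i j : ℕ} (hij : i + j = n) : V ^ i * span R {a ^ (j + 1)} ≤ V ^ n := by
  induction i generalizing j with
  | zero =>
    obtain rfl : j = n := by omega
    simpa using hpow
  | succ i ih =>
    intro y hy
    obtain ⟨x, hx, rfl⟩ := mem_mul_span_singleton.1 hy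
    apply cancel
    · rw [show n + 1 = (i + 1) + (j + 1) by omega, pow_add]
      exact mul_mem_mul hx (pow_mem_pow V ha _)
    · have hle : V ^ (i + 1) * span R {a ^ (j + 2)} ≤ V ^ (n + 1) :=
        calc V ^ (i + 1) * span R {a ^ (j + 2)}
            = V * (V ^ i * span R {a ^ (j + 2)}) := by rw [pow_succ', mul_assoc]
          _ ≤ V * V ^ n := by gcongr; exact ih (by omega)
          _ = V ^ (n + 1) := (pow_succ' ..).symm
      rw [mul_assoc, ← pow_succ]
      exact hle (mul_mem_mul hx (mem_span_singleton_self _))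

lemma pow_add_two_le_sup_span_singleton {R A : Type*} [CommSemiring R] [Semiring A] [Algebra R A]
    {V : Submodule R A} {u a : A} {n : ℕ} (hu : u ∈ V ^ n) (ha : a ∈ V)
    (hline : V ^ (n + 1) ≤ V ^ n ⊔ span R {u * a}) :
    V ^ (n + 2) ≤ V ^ (n + 1) ⊔ span R {u * a * a} := by
  have hslide : V ^ (n + 2) ≤ V ^ (n + 1) + span R {u} * span R {a} * span R {a} :=
    pow_add_two_le_add_mul_mul (by simpa using hu) (by simpa using ha)
      (by simpa [span_mul_span] using hline)
  simpa [span_mul_span] using hslide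

lemma mem_pow_of_mul_mem_pow_succ {F A : Type*} [Field F] [Ring A] [Algebra F A]
    {V : Submodule F A} {w a x : A} {n : ℕ} (ha : a ∈ V)
    (hline : V ^ (n + 1) ≤ V ^ n ⊔ span F {w}) (hwa : w * a ∉ V ^ (n + 1))
    (hx : x ∈ V ^ (n + 1)) (hxa : x * a ∈ V ^ (n + 1)) : x ∈ V ^ n := by
  obtain ⟨y, hy, _, hz, rfl⟩ := mem_sup.1 (hline hx)
  obtain ⟨c, rfl⟩ := mem_span_singleton.1 hz
  have hya : y * a ∈ V ^ (n + 1) := pow_succ V n ▸ mul_mem_mul hy ha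
  have hcwa : c • (w * a) ∈ V ^ (n + 1) := by
    rwa [add_mul, smul_mul_assoc, (V ^ (n + 1)).add_mem_iff_right hya] at hxa
  obtain rfl : c = 0 := by
    by_contra hc
    exact hwa ((smul_mem_iff _ hc).1 hcwa)
  simpa using hy

lemma pow_succ_notMem_pow {F A : Type*} [Field F] [Ring A] [Algebra F A] {V : Submodule F A}
    {u a : A} {n : ℕ} (hu : u ∈ V ^ n) (ha : a ∈ V)
    (hline : V ^ (n + 1) ≤ V ^ n ⊔ span F {u * a}) (hgrow : ¬ V ^ (n + 2) ≤ V ^ (n + 1)) :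
    a ^ (n + 1) ∉ V ^ n := by
  have huaa : u * a * a ∉ V ^ (n + 1) := fun hmem =>
    hgrow ((pow_add_two_le_sup_span_singleton hu ha hline).trans
      (sup_le le_rfl (by simpa using hmem)))
  intro hpow
  have hle : V ^ n * span F {a ^ (0 + 1)} ≤ V ^ n :=
    pow_mul_span_pow_succ_le_pow ha (fun _ => mem_pow_of_mul_mem_pow_succ ha hline huaa) hpow
      (add_zero n)
  have hua : u * a ∈ V ^ n := hle (mul_mem_mul hu (by simp [mem_span_singleton_self]))
  exact huaa (pow_succ V n ▸ mul_mem_mul hua ha)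

lemma pow_succ_mem_pow_of_natDegree_minpoly_le {R A : Type*} [CommRing R] [Nontrivial R] [Ring A]
    [Algebra R A] {V : Submodule R A} {a : A} {n : ℕ} (hone : 1 ∈ V) (ha : a ∈ V)
    (hint : IsIntegral R a) (hdeg : (minpoly R a).natDegree ≤ n + 1) :
    a ^ (n + 1) ∈ V ^ n := by
  have hspan := hint.mem_span_pow (y := a ^ (n + 1)) ⟨Polynomial.X ^ (n + 1), by simp⟩
  refine span_le.2 ?_ hspan
  rintro _ ⟨i, rfl⟩
  exact pow_le_pow_right₀ (one_le.2 hone) (by omega : (i : ℕ) ≤ n) (pow_mem_pow V ha i)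

lemma le_sup_span_singleton_of_finrank_le_succ {K M : Type*} [DivisionRing K] [AddCommGroup M]
    [Module K M] {P Q : Submodule K M} [FiniteDimensional K Q] {w : M} (hPQ : P ≤ Q)
    (hdim : Module.finrank K Q ≤ Module.finrank K P + 1) (hwQ : w ∈ Q) (hwP : w ∉ P) :
    Q ≤ P ⊔ span K {w} := by
  have hle : P ⊔ span K {w} ≤ Q := sup_le hPQ (by simpa using hwQ)
  have := finiteDimensional_of_le hle
  have hlt := finrank_lt_finrank_of_lt (lt_sup_iff_notMem.2 hwP)
  exact (eq_of_le_of_finrank_le hle (by omega)).ge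

end Submodule

section Length

open Module Submodule

variable {F A : Type*} [Field F] [Ring A] [Algebra F A] {S : Set A} {k n : ℕ}

lemma one_mem_span_one_union : (1 : A) ∈ span F ({1} ∪ S) :=
  subset_span (by simp)

lemma Lk_succ : Lk F S (k + 1) = Lk F S k * span F ({1} ∪ S) :=
  pow_succ ..

lemma Lk_mono : Monotone (Lk F S) :=
  pow_right_mono₀ (one_le.2 one_mem_span_one_union)

lemma Lk_eq_top_of_succ_le (hS : Algebra.adjoin F S = ⊤) (h : Lk F S (k + 1) ≤ Lk F S k) :
    Lk F S k = ⊤ := by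
  rw [eq_top_iff, ← Algebra.top_toSubmodule, ← hS, Algebra.adjoin_eq_span, span_le]
  intro x hx
  induction hx using Submonoid.closure_induction_right with
  | one => exact one_le.1 (one_le_pow₀ (one_le.2 one_mem_span_one_union))
  | mul_right x _ s hs hx =>
    apply h
    rw [Lk_succ]
    exact mul_mem_mul hx (subset_span (.inr hs))

lemma Lk_ne_top_of_lt_lenS (hk : k < lenS F S) : Lk F S k ≠ ⊤ :=
  Nat.notMem_of_lt_sInf hk

lemma not_Lk_succ_le (hS : Algebra.adjoin F S = ⊤) (hk : k < lenS F S) :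
    ¬ Lk F S (k + 1) ≤ Lk F S k :=
  fun h => Lk_ne_top_of_lt_lenS hk (Lk_eq_top_of_succ_le hS h)

lemma natDegree_minpoly_le_mAlg [FiniteDimensional F A] (a : A) :
    (minpoly F a).natDegree ≤ mAlg F A := by
  refine le_csSup ⟨finrank F A, ?_⟩ ⟨a, rfl⟩
  rintro _ ⟨τ, rfl⟩
  exact minpoly.natDegree_le τ

lemma Lk_succ_le_sup_span_pow_of_le {a : A} {m : ℕ} (ha : a ∈ S) (hnm : n ≤ m)
    (h : Lk F S (n + 1) ≤ Lk F S n ⊔ span F {a ^ (n + 1)}) :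
    Lk F S (m + 1) ≤ Lk F S m ⊔ span F {a ^ (m + 1)} := by
  have haV : span F {a} ≤ span F ({1} ∪ S) := span_mono (by simp [ha])
  simpa [Lk, span_pow] using
    pow_succ_le_add_pow_succ_of_le haV hnm (by simpa [Lk, span_pow] using h)

lemma exists_Lk_succ_le_sup_span_pow [FiniteDimensional F A] (hS : Algebra.adjoin F S = ⊤)
    (hn : n + 1 < lenS F S) (hdim : finrank F (Lk F S (n + 1)) ≤ finrank F (Lk F S n) + 1) :
    ∃ a ∈ S, Lk F S (n + 1) ≤ Lk F S n ⊔ span F {a ^ (n + 1)} := by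
  have hmono : Lk F S n ≤ Lk F S (n + 1) := Lk_mono n.le_succ
  have hgrow : ¬ Lk F S n * span F ({1} ∪ S) ≤ Lk F S n := by
    rw [← Lk_succ]
    exact not_Lk_succ_le hS (by omega)
  obtain ⟨u, hu, a, ha, hua⟩ := exists_mul_notMem_of_not_mul_span_le hgrow
  have haS : a ∈ S := by
    refine ha.resolve_left ?_
    rintro rfl
    exact hua (by rwa [mul_one])
  have haV : a ∈ span F ({1} ∪ S) := subset_span ha
  have huaV : u * a ∈ Lk F S (n + 1) := by
    rw [Lk_succ]
    exact mul_mem_mul hu haV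
  have hline : Lk F S (n + 1) ≤ Lk F S n ⊔ span F {u * a} :=
    le_sup_span_singleton_of_finrank_le_succ hmono hdim huaV hua
  have hpow : a ^ (n + 1) ∉ Lk F S n :=
    pow_succ_notMem_pow hu haV hline (not_Lk_succ_le hS hn)
  exact ⟨a, haS, le_sup_span_singleton_of_finrank_le_succ hmono hdim (pow_mem_pow _ haV _) hpow⟩

lemma finrank_Lk_add_two_le [FiniteDimensional F A] (hS : Algebra.adjoin F S = ⊤)
    (hdeg : ∀ a ∈ S, (minpoly F a).natDegree ≤ lenS F S) (hn : n + 1 < lenS F S) :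
    finrank F (Lk F S n) + 2 ≤ finrank F (Lk F S (n + 1)) := by
  by_contra! hdim
  obtain ⟨a, ha, hline⟩ := exists_Lk_succ_le_sup_span_pow hS hn (by omega)
  obtain ⟨m, hm⟩ : ∃ m, lenS F S = m + 1 := Nat.exists_eq_add_one.2 (by omega)
  have hlast : Lk F S (m + 1) ≤ Lk F S m ⊔ span F {a ^ (m + 1)} :=
    Lk_succ_le_sup_span_pow_of_le ha (by omega) hline
  have hpow : a ^ (m + 1) ∈ Lk F S m :=
    pow_succ_mem_pow_of_natDegree_minpoly_le one_mem_span_one_union (subset_span (.inr ha))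
      (Algebra.IsIntegral.isIntegral a) (hm ▸ hdeg a ha)
  exact not_Lk_succ_le hS (by omega) (hlast.trans (sup_le le_rfl (by simpa using hpow)))

lemma nontrivial_of_lenS_pos (h : 0 < lenS F S) : Nontrivial A := by
  by_contra hA
  rw [not_nontrivial_iff_subsingleton] at hA
  exact Lk_ne_top_of_lt_lenS h (Subsingleton.elim _ _)

lemma two_mul_add_one_le_finrank_Lk [FiniteDimensional F A] (hS : Algebra.adjoin F S = ⊤)
    (hdeg : ∀ a ∈ S, (minpoly F a).natDegree ≤ lenS F S) (hn : n < lenS F S) :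
    2 * n + 1 ≤ finrank F (Lk F S n) := by
  induction n with
  | zero =>
    have := nontrivial_of_lenS_pos hn
    rw [Lk, pow_zero, one_eq_span, finrank_span_singleton one_ne_zero]
  | succ n ih =>
    have hstep := finrank_Lk_add_two_le hS hdeg hn
    have hprev := ih (by omega)
    omega

lemma two_mul_lenS_le_finrank [FiniteDimensional F A] (hS : Algebra.adjoin F S = ⊤)
    (hdeg : ∀ a ∈ S, (minpoly F a).natDegree ≤ lenS F S) :
    2 * lenS F S ≤ finrank F A := by
  rcases hl : lenS F S with _ | m
  · simp
  have hm : m < lenS F S := by omega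
  have hbelow := two_mul_add_one_le_finrank_Lk hS hdeg hm
  have hlast : finrank F (Lk F S m) < finrank F A := finrank_lt (Lk_ne_top_of_lt_lenS hm)
  omega

theorem stmt_1_general [FiniteDimensional F A] (hS : Algebra.adjoin F S = ⊤)
    (hdeg : ∀ a ∈ S, (minpoly F a).natDegree ≤ lenS F S) :
    (∀ k, 1 ≤ k → k ≤ lenS F S - 1 →
      2 ≤ finrank F (Lk F S k) - finrank F (Lk F S (k - 1))) ∧
    2 * lenS F S ≤ finrank F A := by
  refine ⟨fun k hk hkl => ?_, two_mul_lenS_le_finrank hS hdeg⟩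
  obtain ⟨n, rfl⟩ := Nat.exists_eq_add_of_le' hk
  have hstep := finrank_Lk_add_two_le hS hdeg (n := n) (by omega)
  rw [Nat.add_sub_cancel]
  omega

end Length

theorem stmt_1 (F A : Type*) [Field F] [Ring A] [Algebra F A] [FiniteDimensional F A]
    (S : Set A) (hS : Algebra.adjoin F S = ⊤) (h : mAlg F A ≤ lenS F S) :
    (∀ k, 1 ≤ k → k ≤ lenS F S - 1 →
      2 ≤ Module.finrank F (Lk F S k) - Module.finrank F (Lk F S (k - 1))) ∧
    2 * lenS F S ≤ Module.finrank F A :=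
  stmt_1_general hS fun a _ => (natDegree_minpoly_le_mAlg a).trans h
end

section
/- Let F be a field and n ≥ 3. The intersection of the F-linear span of {I, A_n, A_n^2, …, A_n^{n−1}} (the space of circulants) with the F-linear span of {B_n, B_nA_n, …, B_nA_n^{n−1}} (the space of anti-circulants) has dimension 1 over F if n is odd, and dimension 2 if n is even. -/
/-- The circulant permutation matrix `A_n` (ones in positions `(i, i+1)` cyclically). -/
def Acirc (n : ℕ) (F : Type*) [Field F] : Matrix (Fin n) (Fin n) F :=
  Matrix.of fun i j => if (j : ℕ) = ((i : ℕ) + 1) % n then 1 else 0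

/-- The anti-circulant permutation matrix `B_n` (ones in positions `(i, n+1-i)`,
i.e. `i + j = n - 1` in 0-indexed coordinates). -/
def Bcirc (n : ℕ) (F : Type*) [Field F] : Matrix (Fin n) (Fin n) F :=
  Matrix.of fun i j => if (i : ℕ) + (j : ℕ) = n - 1 then 1 else 0

/-!
Index rows and columns by a commutative group `G`. Then `v (i - j) = w (i + j)` for all `i`, `j`
exactly when `v = w` and `v` is invariant under translation by `2G`. The matrices that are both
circulant and anti-circulant thus correspond to the functions on `G ⧸ 2G`, and for `G = ℤ/n` this
quotient has `gcd(n, 2)` elements.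
-/

open Matrix

section Span

variable {R M ι κ : Type*} [Semiring R] [AddCommMonoid M] [Module R M] [Finite ι] [DecidableEq ι]

theorem span_range_map_single_eq_range (f : (ι → R) →ₗ[R] M) {σ : κ → ι}
    (hσ : Function.Surjective σ) :
    Submodule.span R (Set.range fun k => f (Pi.single (σ k) 1)) = LinearMap.range f := by
  have hrange : (Set.range fun k => f (Pi.single (σ k) 1)) =
      f '' Set.range (Pi.basisFun R ι) := by
    rw [← hσ.range_comp, ← Set.range_comp]
    simp only [Function.comp_def, Pi.basisFun_apply]
  rw [hrange, Submodule.span_image, Module.Basis.span_eq, Submodule.map_top]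

end Span

section Quotient

variable {R M G : Type*} [Semiring R] [AddCommMonoid M] [Module R M] [AddGroup G]

theorem mem_range_funLeft_mk_iff {H : AddSubgroup G} {v : G → M} :
    v ∈ LinearMap.range (LinearMap.funLeft R M (QuotientAddGroup.mk : G → G ⧸ H)) ↔
      ∀ x, ∀ y ∈ H, v (x + y) = v x := by
  constructor
  · rintro ⟨u, rfl⟩ x y hy
    simp only [LinearMap.funLeft_apply, QuotientAddGroup.mk_add_of_mem x hy]
  · intro h
    refine ⟨Quotient.lift v fun x y hxy => ?_, rfl⟩
    simpa using (h x _ (QuotientAddGroup.leftRel_apply.mp hxy)).symm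

end Quotient

section Circulant

variable {R G : Type*}

/-- The anti-circulant (Hankel) matrix on an additive index type, whose `(i, j)` entry is
`v (i + j)`; the counterpart of `Matrix.circulant v`, whose `(i, j)` entry is `v (i - j)`. -/
def antiCirculant [Add G] (v : G → R) : Matrix G G R :=
  Matrix.of fun i j => v (i + j)

@[simp]
theorem antiCirculant_apply [Add G] (v : G → R) (i j : G) :
    antiCirculant v i j = v (i + j) := rfl

section Single

variable [DecidableEq G] [Fintype G]

theorem mul_circulant_single_apply [NonAssocSemiring R] [AddGroup G]
    (M : Matrix G G R) (a i j : G) :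
    (M * (circulant (Pi.single a 1) : Matrix G G R)) i j = M i (a + j) := by
  simp [mul_apply, Pi.single_apply, sub_eq_iff_eq_add]

theorem circulant_single_mul_circulant_single [NonAssocSemiring R] [AddGroup G] (a b : G) :
    circulant (Pi.single a (1 : R)) * circulant (Pi.single b 1) =
      circulant (Pi.single (a + b) 1) := by
  ext i j
  rw [mul_circulant_single_apply]
  simp only [circulant_apply, Pi.single_apply, sub_add_eq_sub_sub_swap, sub_eq_iff_eq_add]

theorem circulant_single_pow [Semiring R] [AddGroup G] (a : G) (k : ℕ) :
    circulant (Pi.single a (1 : R)) ^ k = circulant (Pi.single (k • a) 1) := by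
  induction k with
  | zero => rw [pow_zero, zero_nsmul, circulant_single_one]
  | succ k ih => rw [pow_succ, ih, circulant_single_mul_circulant_single, succ_nsmul]

theorem antiCirculant_single_mul_circulant_single [NonAssocSemiring R] [AddCommGroup G]
    (a b : G) :
    antiCirculant (Pi.single a (1 : R)) * circulant (Pi.single b 1) =
      antiCirculant (Pi.single (a - b) 1) := by
  ext i j
  rw [mul_circulant_single_apply]
  simp only [antiCirculant_apply, Pi.single_apply, add_comm b j, ← add_assoc,
    eq_sub_iff_add_eq]

end Single

theorem circulant_eq_antiCirculant_iff [AddGroup G] {v w : G → R} :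
    circulant v = antiCirculant w ↔ v = w ∧ ∀ x y, v (x + 2 • y) = v x := by
  simp only [← Matrix.ext_iff, circulant_apply, antiCirculant_apply]
  constructor
  · intro h
    obtain rfl : v = w := funext fun i => by simpa using h i 0
    refine ⟨rfl, fun x y => ?_⟩
    calc v (x + 2 • y) = v ((x + y) + y) := by rw [two_nsmul, add_assoc]
      _ = v ((x + y) - y) := (h _ _).symm
      _ = v x := by rw [add_sub_cancel_right]
  · rintro ⟨rfl, h⟩ i j
    calc v (i - j) = v (i - j + 2 • j) := (h _ _).symm
      _ = v (i + j) := by rw [two_nsmul, ← add_assoc, sub_add_cancel]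

variable (R G) [Semiring R]

/-- `Matrix.circulant` as a linear map, so that its range is the module of circulant matrices. -/
def circulantLinearMap [Sub G] : (G → R) →ₗ[R] Matrix G G R where
  toFun := circulant
  map_add' := circulant_add
  map_smul' := circulant_smul

/-- `antiCirculant` as a linear map, so that its range is the module of anti-circulant matrices. -/
def antiCirculantLinearMap [Add G] : (G → R) →ₗ[R] Matrix G G R where
  toFun := antiCirculant
  map_add' _ _ := rfl
  map_smul' _ _ := rfl

variable [AddCommGroup G]

theorem range_circulant_inf_range_antiCirculant :
    LinearMap.range (circulantLinearMap R G) ⊓ LinearMap.range (antiCirculantLinearMap R G) =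
      LinearMap.range (circulantLinearMap R G ∘ₗ LinearMap.funLeft R R
        (QuotientAddGroup.mk : G → G ⧸ (nsmulAddMonoidHom 2 : G →+ G).range)) := by
  rw [LinearMap.range_comp]
  ext M
  simp only [Submodule.mem_inf, Submodule.mem_map, mem_range_funLeft_mk_iff]
  constructor
  · rintro ⟨⟨v, rfl⟩, w, hw⟩
    refine ⟨v, ?_, rfl⟩
    rintro x _ ⟨y, rfl⟩
    exact (circulant_eq_antiCirculant_iff.mp hw.symm).2 x y
  · rintro ⟨v, hv, rfl⟩
    have hv : circulant v = antiCirculant v :=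
      circulant_eq_antiCirculant_iff.mpr ⟨rfl, fun x y => hv x _ ⟨y, rfl⟩⟩
    exact ⟨⟨v, rfl⟩, v, hv.symm⟩

theorem finrank_range_circulant_inf_range_antiCirculant [StrongRankCondition R]
    [(nsmulAddMonoidHom 2 : G →+ G).range.FiniteIndex] :
    Module.finrank R ↥(LinearMap.range (circulantLinearMap R G) ⊓
      LinearMap.range (antiCirculantLinearMap R G)) =
        (nsmulAddMonoidHom 2 : G →+ G).range.index := by
  have := Fintype.ofFinite (G ⧸ (nsmulAddMonoidHom 2 : G →+ G).range)
  rw [range_circulant_inf_range_antiCirculant, LinearMap.finrank_range_of_inj,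
    Module.finrank_fintype_fun_eq_card, AddSubgroup.index_eq_card, Nat.card_eq_fintype_card]
  exact circulant_injective.comp
    (LinearMap.funLeft_injective_of_surjective R R _ QuotientAddGroup.mk_surjective)

end Circulant

section Fin

variable {n : ℕ} [NeZero n]

theorem Acirc_eq_circulant (F : Type*) [Field F] :
    Acirc n F = circulant (Pi.single (-1) 1) := by
  ext i j
  have hij : (j : ℕ) = ((i : ℕ) + 1) % n ↔ i - j = -1 := by
    rw [sub_eq_iff_eq_add, eq_neg_add_iff_add_eq, add_comm 1 i, eq_comm, Fin.ext_iff,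
      Fin.val_add, Fin.val_one', Nat.add_mod_mod]
  simp only [Acirc, of_apply, hij, circulant_apply, Pi.single_apply]

theorem Bcirc_eq_antiCirculant (F : Type*) [Field F] :
    Bcirc n F = antiCirculant (Pi.single (-1) 1) := by
  ext i j
  have hij : (i : ℕ) + (j : ℕ) = n - 1 ↔ i + j = -1 := by
    obtain ⟨m, rfl⟩ := Nat.exists_eq_succ_of_ne_zero (NeZero.ne n)
    rw [← Fin.neg_last m, neg_neg, ← eq_sub_iff_add_eq', Fin.last_sub, Fin.ext_iff, Fin.val_rev]
    lia
  simp only [Bcirc, of_apply, hij, antiCirculant_apply, Pi.single_apply]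

theorem fin_val_nsmul_one (k : Fin n) : (k : ℕ) • (1 : Fin n) = k := by
  open Fin.CommRing in
  rw [nsmul_one, Fin.cast_val_eq_self]

instance isAddCyclic_fin : IsAddCyclic (Fin n) :=
  ⟨1, fun k => ⟨(k : ℕ), by simp [fin_val_nsmul_one]⟩⟩

theorem span_Acirc_pow_eq_range (F : Type*) [Field F] :
    Submodule.span F (Set.range fun i : Fin n => Acirc n F ^ (i : ℕ)) =
      LinearMap.range (circulantLinearMap F (Fin n)) := by
  simp only [Acirc_eq_circulant, circulant_single_pow, smul_neg, fin_val_nsmul_one]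
  exact span_range_map_single_eq_range (circulantLinearMap F (Fin n)) neg_surjective

theorem span_Bcirc_mul_Acirc_pow_eq_range (F : Type*) [Field F] :
    Submodule.span F (Set.range fun i : Fin n => Bcirc n F * Acirc n F ^ (i : ℕ)) =
      LinearMap.range (antiCirculantLinearMap F (Fin n)) := by
  simp only [Acirc_eq_circulant, Bcirc_eq_antiCirculant, circulant_single_pow, smul_neg,
    fin_val_nsmul_one, antiCirculant_single_mul_circulant_single]
  exact span_range_map_single_eq_range (antiCirculantLinearMap F (Fin n))
    ((Equiv.subLeft (-1)).surjective.comp neg_surjective)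

end Fin

theorem stmt_5 (F : Type*) [Field F] (n : ℕ) (hn : 3 ≤ n) :
    Module.finrank F
        ↥(Submodule.span F (Set.range fun i : Fin n => Acirc n F ^ (i : ℕ)) ⊓
          Submodule.span F (Set.range fun i : Fin n => Bcirc n F * Acirc n F ^ (i : ℕ))) =
      if Odd n then 1 else 2 := by
  have : NeZero n := ⟨by lia⟩
  rw [span_Acirc_pow_eq_range, span_Bcirc_mul_Acirc_pow_eq_range,
    finrank_range_circulant_inf_range_antiCirculant, IsAddCyclic.index_nsmulAddMonoidHom_range,
    Nat.card_fin]
  split_ifs with hodd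
  · exact Nat.coprime_two_right.mpr hodd
  · exact Nat.gcd_eq_right (Nat.not_odd_iff_even.mp hodd).two_dvd
end

section
/- Let F be a field, A and B finite-dimensional associative unital F-algebras, and φ : A → B a surjective F-algebra homomorphism. If every generating set of B has length at most L, then every generating set of A has length at most L + dim_F A − dim_F B; i.e., l(A) ≤ l(B) + dim_F A − dim_F B. -/
/-!
A generating set `S` gives the increasing chain `Lk F S 0 ≤ Lk F S 1 ≤ ⋯` of powers of
`span F ({1} ∪ S)`. If two consecutive terms agree, the chain is constant from there on, so that
term is a subalgebra containing `S`, hence equal to `A`. The dimension therefore grows by at least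
one at every step until it reaches `dim A`. If `k` is the length of `φ '' S`, then `φ` maps
`Lk F S k` onto `B`, so `dim (Lk F S k) ≥ dim B`, and at most `dim A - dim B` further steps remain.
-/

lemma pow_eq_pow_of_pow_succ_eq {M : Type*} [Monoid M] {a : M} {m n : ℕ}
    (h : a ^ (m + 1) = a ^ m) (hmn : m ≤ n) : a ^ n = a ^ m := by
  induction n, hmn using Nat.le_induction with
  | base => rfl
  | succ n _ ih => rw [pow_succ, ih, ← pow_succ, h]

lemma adjoin_le_pow_of_pow_succ_eq {R A : Type*} [CommSemiring R] [Semiring A] [Algebra R A]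
    {S : Set A} {V : Submodule R A} (hV : 1 ≤ V) (hSV : S ⊆ V) {n : ℕ}
    (h : V ^ (n + 1) = V ^ n) : Subalgebra.toSubmodule (Algebra.adjoin R S) ≤ V ^ n := by
  have one_mem : 1 ∈ V ^ n := Submodule.one_le.mp (one_le_pow₀ hV)
  have mul_mem (x y : A) (hx : x ∈ V ^ n) (hy : y ∈ V ^ n) : x * y ∈ V ^ n := by
    rw [← pow_eq_pow_of_pow_succ_eq h (Nat.le_add_right n n), pow_add]
    exact Submodule.mul_mem_mul hx hy
  have le_pow : V ≤ V ^ n := h ▸ le_self_pow₀ hV n.succ_ne_zero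
  exact Algebra.adjoin_le (S := (V ^ n).toSubalgebra one_mem mul_mem) (hSV.trans le_pow)

lemma eq_top_of_finrank_le_finrank_add {K E : Type*} [DivisionRing K] [AddCommGroup E]
    [Module K E] [FiniteDimensional K E] {f : ℕ → Submodule K E} (hf : Monotone f)
    (hstab : ∀ n, f (n + 1) = f n → f n = ⊤) {k j : ℕ}
    (h : Module.finrank K E ≤ Module.finrank K (f k) + j) : f (k + j) = ⊤ := by
  induction j generalizing k with
  | zero => exact Submodule.eq_top_of_finrank_eq (le_antisymm (Submodule.finrank_le _) h)
  | succ j ih =>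
    rcases (hf (Nat.le_add_right k 1)).eq_or_lt with heq | hlt
    · exact top_unique (hstab k heq.symm ▸ hf (Nat.le_add_right k (j + 1)))
    · have hgrow := Submodule.finrank_lt_finrank_of_lt hlt
      rw [Nat.add_comm j, ← Nat.add_assoc]
      exact ih (by omega)

lemma adjoin_image_eq_top {R A B : Type*} [CommSemiring R] [Semiring A] [Algebra R A]
    [Semiring B] [Algebra R B] {φ : A →ₐ[R] B} (hφ : Function.Surjective φ) {S : Set A}
    (hS : Algebra.adjoin R S = ⊤) : Algebra.adjoin R (φ '' S) = ⊤ := by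
  rw [Algebra.adjoin_image, hS, Algebra.map_top, (AlgHom.range_eq_top φ).mpr hφ]

section Length

variable {F A B : Type*} [Field F] [Ring A] [Algebra F A] [Ring B] [Algebra F B] {S : Set A}

lemma one_le_span_one_union (S : Set A) : 1 ≤ Submodule.span F ({1} ∪ S) :=
  Submodule.one_le.mpr (Submodule.subset_span (Or.inl rfl))

lemma Lk_monotone (S : Set A) : Monotone (Lk F S) :=
  pow_right_monotone (one_le_span_one_union S)

lemma map_Lk (φ : A →ₐ[F] B) (S : Set A) (k : ℕ) :
    (Lk F S k).map φ.toLinearMap = Lk F (φ '' S) k := by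
  simp [Lk, Submodule.map_pow, Submodule.map_span, Set.image_insert_eq]

lemma Lk_eq_top_of_succ_eq (hS : Algebra.adjoin F S = ⊤) {k : ℕ}
    (h : Lk F S (k + 1) = Lk F S k) : Lk F S k = ⊤ := by
  have hle := adjoin_le_pow_of_pow_succ_eq (one_le_span_one_union S)
    (Set.subset_union_right.trans Submodule.subset_span) h
  rwa [hS, Algebra.top_toSubmodule, top_le_iff] at hle

lemma Lk_eq_top_of_finrank_le [FiniteDimensional F A] (hS : Algebra.adjoin F S = ⊤) {k j : ℕ}
    (h : Module.finrank F A ≤ Module.finrank F (Lk F S k) + j) : Lk F S (k + j) = ⊤ :=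
  eq_top_of_finrank_le_finrank_add (Lk_monotone S) (fun _ => Lk_eq_top_of_succ_eq hS) h

lemma Lk_lenS [FiniteDimensional F A] (hS : Algebra.adjoin F S = ⊤) :
    Lk F S (lenS F S) = ⊤ :=
  Nat.sInf_mem (s := {k | Lk F S k = ⊤})
    ⟨0 + Module.finrank F A, Lk_eq_top_of_finrank_le hS (Nat.le_add_left _ _)⟩

lemma lenS_add_finrank_Lk_le [FiniteDimensional F A] (hS : Algebra.adjoin F S = ⊤) (k : ℕ) :
    lenS F S + Module.finrank F (Lk F S k) ≤ k + Module.finrank F A := by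
  have hle : Module.finrank F (Lk F S k) ≤ Module.finrank F A := Submodule.finrank_le _
  have hlen : lenS F S ≤ k + (Module.finrank F A - Module.finrank F (Lk F S k)) :=
    Nat.sInf_le (Lk_eq_top_of_finrank_le hS (by omega))
  omega

theorem stmt_11_general [FiniteDimensional F A] {φ : A →ₐ[F] B} (hφ : Function.Surjective φ)
    (hS : Algebra.adjoin F S = ⊤) :
    lenS F S + Module.finrank F B ≤ lenS F (φ '' S) + Module.finrank F A := by
  have : FiniteDimensional F B := Module.Finite.of_surjective φ.toLinearMap hφ
  have hmap : (Lk F S (lenS F (φ '' S))).map φ.toLinearMap = ⊤ := by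
    rw [map_Lk, Lk_lenS (adjoin_image_eq_top hφ hS)]
  have hdim : Module.finrank F B ≤ Module.finrank F (Lk F S (lenS F (φ '' S))) := by
    rw [← finrank_top F B, ← hmap]
    exact Submodule.finrank_map_le _ _
  exact (Nat.add_le_add_left hdim _).trans (lenS_add_finrank_Lk_le hS _)

end Length

theorem stmt_11 (F A B : Type*) [Field F] [Ring A] [Algebra F A] [Ring B] [Algebra F B]
    [FiniteDimensional F A] [FiniteDimensional F B]
    (φ : A →ₐ[F] B) (hφ : Function.Surjective φ) (L : ℕ)
    (hB : ∀ T : Set B, Algebra.adjoin F T = ⊤ → lenS F T ≤ L) :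
    ∀ S : Set A, Algebra.adjoin F S = ⊤ →
      lenS F S ≤ L + Module.finrank F A - Module.finrank F B := by
  intro S hS
  have hL : lenS F (φ '' S) ≤ L := hB _ (adjoin_image_eq_top hφ hS)
  exact Nat.le_sub_of_add_le ((stmt_11_general hφ hS).trans (Nat.add_le_add_right hL _))
end

section
/- Let F be an arbitrary field and n ≥ 4 even. Then the length of the group algebra F D_n of the dihedral group of order 2n equals n or n + 1; precisely, every generating set S of F D_n satisfies l(S) ≤ n + 1, and there exists a generating set with l(S) ≥ n. -/
/-!
Let `V = span F ({1} ∪ S)`, so that the spaces `V ^ k` increase strictly until they reach the whole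
algebra. If `V ^ m` is proper although the algebra has dimension at most `2 * m`, then some step
`V ^ k < V ^ (k + 1)` with `k < m` has codimension one. Such a step is spanned modulo `V ^ k` by
`x ^ (k + 1)` for a single `x ∈ V`, and so is, by induction, every later step, by the corresponding
power of the same `x`. In particular `x ^ (m + 1) ∉ V ^ m`, so the minimal polynomial of `x` has
degree at least `m + 2`.

In the group algebra of `D_n`, every `x = p + q * b`, with `p` and `q` in the group algebra of the
rotations, satisfies a monic quadratic equation over the inversion-invariant elements of the latter.
These form a space of dimension at most `n / 2 + 1`, so minimal polynomials have degree at most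
`2 * (n / 2 + 1)`, and `m = 2 * (n / 2) + 1` contradicts the previous paragraph.

Conversely, `D_n` is generated by two involutions, and there are at most `2 * k + 1` alternating
words of length at most `k` in two involutions, so they can span a space of dimension `2 * n` only
if `2 * n ≤ 2 * k + 1`.
-/

section PowerFiltration

variable {R A : Type*} [CommSemiring R] [Semiring A] [Algebra R A] {V W : Submodule R A} {k : ℕ}

theorem pow_eq_top_of_pow_succ_le (hone : 1 ≤ V) (hgen : Algebra.adjoin R (V : Set A) = ⊤)
    (hstep : V ^ (k + 1) ≤ V ^ k) : V ^ k = ⊤ := by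
  have habsorb (j : ℕ) : V ^ (j + k) ≤ V ^ k := by
    induction j with
    | zero => rw [zero_add]
    | succ j ih =>
      calc V ^ (j + 1 + k) = V * V ^ (j + k) := by rw [add_right_comm, pow_succ']
        _ ≤ V * V ^ k := mul_le_mul_right ih V
        _ ≤ V ^ k := by rwa [← pow_succ']
  let B : Subalgebra R A := (V ^ k).toSubalgebra
    (Submodule.one_le.1 (one_le_pow_of_one_le' hone k))
    fun x y hx hy => habsorb k (pow_add V k k ▸ Submodule.mul_mem_mul hx hy)
  have hVB : V ≤ V ^ k :=
    calc V = V ^ 1 := (pow_one V).symm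
      _ ≤ V ^ (1 + k) := pow_le_pow_right' hone (Nat.le_add_right 1 k)
      _ ≤ V ^ k := habsorb 1
  have hB : Algebra.adjoin R (V : Set A) ≤ B := Algebra.adjoin_le hVB
  exact eq_top_iff.2 fun x _ => hB (hgen ▸ Algebra.mem_top)

theorem sup_span_singleton_eq_of_covBy {M : Type*} [AddCommMonoid M] [Module R M]
    {p q : Submodule R M} (hcov : p ⋖ q) {y : M} (hyq : y ∈ q) (hyp : y ∉ p) :
    p ⊔ Submodule.span R {y} = q := by
  refine (hcov.eq_or_eq le_sup_left (sup_le hcov.le ?_)).resolve_left fun h => hyp ?_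
  · rwa [Submodule.span_singleton_le_iff_mem]
  · exact h ▸ Submodule.mem_sup_right (Submodule.mem_span_singleton_self y)

-- If `u * z ∉ V ^ k` with `u ∈ U`, `z ∈ V`, then `u * z` spans `V ^ (k + 1)` modulo `V ^ k`, while
-- `W * (u * z) = (W * u) * z` stays inside `V ^ (k + 1)`.
theorem mul_le_pow_of_covBy {U : Submodule R A} (hcov : V ^ k ⋖ V ^ (k + 1)) (hWV : W ≤ V)
    (hgrow : ¬ W * V ^ (k + 1) ≤ V ^ (k + 1)) (hU : U ≤ V ^ k) (hWU : W * U ≤ V ^ k) :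
    U * V ≤ V ^ k := by
  refine Submodule.mul_le.2 fun u hu z hz => by_contra fun huz => hgrow ?_
  have huz' : u * z ∈ V ^ (k + 1) := pow_succ V k ▸ Submodule.mul_mem_mul (hU hu) hz
  have hWuz : W * Submodule.span R {u * z} ≤ V ^ (k + 1) :=
    calc W * Submodule.span R {u * z}
        = W * Submodule.span R {u} * Submodule.span R {z} := by
          rw [mul_assoc, Submodule.span_mul_span, Set.singleton_mul_singleton]
      _ ≤ W * U * V := by
          gcongr <;> rwa [Submodule.span_singleton_le_iff_mem]
      _ ≤ V ^ (k + 1) := by rw [pow_succ]; gcongr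
  calc W * V ^ (k + 1) = W * V ^ k ⊔ W * Submodule.span R {u * z} := by
        rw [← sup_span_singleton_eq_of_covBy hcov huz' huz, Submodule.mul_sup]
    _ ≤ V ^ (k + 1) := sup_le (by rw [pow_succ']; gcongr) hWuz

-- The letters of a product of `k + 1` elements of `V` can be traded one by one for elements of `W`.
theorem not_pow_succ_le_pow_of_covBy (hcov : V ^ k ⋖ V ^ (k + 1)) (hWV : W ≤ V)
    (hgrow : ¬ W * V ^ (k + 1) ≤ V ^ (k + 1)) : ¬ W ^ (k + 1) ≤ V ^ k := by
  intro hle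
  have htrade (j : ℕ) : ∀ i, i + j = k + 1 → W ^ i * V ^ j ≤ V ^ k := by
    induction j with
    | zero => rintro i rfl; simpa using hle
    | succ j ih =>
      intro i hij
      rw [pow_succ, ← mul_assoc]
      refine mul_le_pow_of_covBy hcov hWV hgrow ?_ ?_
      · calc W ^ i * V ^ j ≤ V ^ i * V ^ j := by gcongr
          _ = V ^ k := by rw [← pow_add, show i + j = k by omega]
      · rw [← mul_assoc, ← pow_succ']
        exact ih (i + 1) (by omega)
  exact hcov.lt.not_ge (by simpa using htrade (k + 1) 0 (zero_add _))

theorem exists_sup_span_pow_eq_of_covBy (hcov : V ^ k ⋖ V ^ (k + 1))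
    (hgrow : ¬ V ^ (k + 2) ≤ V ^ (k + 1)) :
    ∃ x ∈ V, V ^ k ⊔ Submodule.span R {x ^ (k + 1)} = V ^ (k + 1) := by
  obtain ⟨x, hx, y, hy, hxy⟩ : ∃ x ∈ V, ∃ y ∈ V ^ (k + 1), x * y ∉ V ^ (k + 1) := by
    rw [pow_succ' V (k + 1), Submodule.mul_le] at hgrow
    push Not at hgrow
    exact hgrow
  have hxgrow : ¬ Submodule.span R {x} * V ^ (k + 1) ≤ V ^ (k + 1) := fun h =>
    hxy (h (Submodule.mul_mem_mul (Submodule.mem_span_singleton_self x) hy))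
  have hxpow : x ^ (k + 1) ∉ V ^ k := by
    simpa only [Submodule.span_pow, Set.singleton_pow, Submodule.span_singleton_le_iff_mem]
      using not_pow_succ_le_pow_of_covBy hcov ((Submodule.span_singleton_le_iff_mem x V).2 hx)
        hxgrow
  exact ⟨x, hx, sup_span_singleton_eq_of_covBy hcov (Submodule.pow_mem_pow V hx _) hxpow⟩

theorem pow_succ_succ_le_sup_span_pow {x : A} (hx : x ∈ V)
    (hstep : V ^ (k + 1) ≤ V ^ k ⊔ Submodule.span R {x ^ (k + 1)}) :
    V ^ (k + 2) ≤ V ^ (k + 1) ⊔ Submodule.span R {x ^ (k + 2)} := by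
  have hspan (i : ℕ) : Submodule.span R {x ^ i} = Submodule.span R {x} ^ i := by
    rw [Submodule.span_pow, Set.singleton_pow]
  have hXV : Submodule.span R {x} ≤ V := (Submodule.span_singleton_le_iff_mem x V).2 hx
  rw [hspan] at hstep ⊢
  set X := Submodule.span R {x}
  calc V ^ (k + 2) = V * V ^ (k + 1) := pow_succ' V (k + 1)
    _ ≤ V * (V ^ k ⊔ X ^ (k + 1)) := by gcongr
    _ = V ^ (k + 1) ⊔ V * X ^ k * X := by
        rw [Submodule.mul_sup, ← pow_succ', pow_succ X, mul_assoc]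
    _ ≤ V ^ (k + 1) ⊔ V ^ (k + 1) * X := by
        rw [pow_succ' V k]; gcongr
    _ ≤ V ^ (k + 1) ⊔ (V ^ k ⊔ X ^ (k + 1)) * X := by gcongr
    _ = V ^ (k + 1) ⊔ V ^ k * X ⊔ X ^ (k + 2) := by
        rw [Submodule.sup_mul, ← pow_succ, sup_assoc]
    _ ≤ V ^ (k + 1) ⊔ X ^ (k + 2) := by
        refine sup_le_sup_right (sup_le le_rfl ?_) _
        rw [pow_succ]; gcongr

theorem pow_succ_le_sup_span_pow_of_le {x : A} (hx : x ∈ V)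
    (hstep : V ^ (k + 1) ≤ V ^ k ⊔ Submodule.span R {x ^ (k + 1)}) {j : ℕ} (hkj : k ≤ j) :
    V ^ (j + 1) ≤ V ^ j ⊔ Submodule.span R {x ^ (j + 1)} := by
  induction j, hkj using Nat.le_induction with
  | base => exact hstep
  | succ j _ ih => exact pow_succ_succ_le_sup_span_pow hx ih

end PowerFiltration

section LengthBound

theorem finrank_add_two_mul_le_of_not_covBy {K M : Type*} [DivisionRing K] [AddCommGroup M]
    [Module K M] [FiniteDimensional K M] {W : ℕ → Submodule K M} {m : ℕ}
    (hlt : ∀ k < m, W k < W (k + 1)) (hcov : ∀ k < m, ¬ W k ⋖ W (k + 1)) :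
    Module.finrank K (W 0) + 2 * m ≤ Module.finrank K (W m) := by
  induction m with
  | zero => simp
  | succ m ih =>
    obtain ⟨U, hmU, hU⟩ := (not_covBy_iff (hlt m m.lt_succ_self)).1 (hcov m m.lt_succ_self)
    have := ih (fun k hk => hlt k (by omega)) fun k hk => hcov k (by omega)
    have := Submodule.finrank_lt_finrank_of_lt hmU
    have := Submodule.finrank_lt_finrank_of_lt hU
    omega

theorem pow_mem_pow_of_natDegree_minpoly_le {R A : Type*} [CommRing R] [Nontrivial R] [Ring A]
    [Algebra R A] {V : Submodule R A} (hone : 1 ≤ V) {x : A} (hx : x ∈ V) (hint : IsIntegral R x)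
    {m : ℕ} (hdeg : (minpoly R x).natDegree ≤ m + 1) (j : ℕ) : x ^ j ∈ V ^ m := by
  have hspan := hint.mem_span_pow ⟨Polynomial.X ^ j, (Polynomial.aeval_X_pow x).symm⟩
  refine Submodule.span_le.2 ?_ hspan
  rintro _ ⟨i, rfl⟩
  exact pow_le_pow_right' hone (by omega) (Submodule.pow_mem_pow V hx i)

variable {F A : Type*} [Field F] [Ring A] [Algebra F A] [FiniteDimensional F A]

theorem exists_covBy_pow_of_finrank_le [Nontrivial A] {V : Submodule F A} {m : ℕ}
    (hlt : ∀ k < m, V ^ k < V ^ (k + 1)) (hdim : Module.finrank F A ≤ 2 * m) :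
    ∃ k < m, V ^ k ⋖ V ^ (k + 1) := by
  by_contra! hcov
  have hgrow := finrank_add_two_mul_le_of_not_covBy hlt hcov
  have hzero : Module.finrank F ↥(V ^ 0) = 1 := by
    rw [pow_zero, Submodule.one_eq_span, finrank_span_singleton one_ne_zero]
  have := (V ^ m).finrank_le
  omega

theorem Lk_eq_top_of_natDegree_minpoly_le {S : Set A} (hS : Algebra.adjoin F S = ⊤) {m : ℕ}
    (hdim : Module.finrank F A ≤ 2 * m) (hdeg : ∀ x : A, (minpoly F x).natDegree ≤ m + 1) :
    Lk F S m = ⊤ := by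
  unfold Lk
  set V := Submodule.span F ({1} ∪ S) with hV
  have hone : 1 ≤ V := Submodule.one_le.2 (Submodule.subset_span (by simp))
  have hgen : Algebra.adjoin F (V : Set A) = ⊤ := by
    rw [hV, Algebra.adjoin_span, eq_top_iff, ← hS]
    exact Algebra.adjoin_mono Set.subset_union_right
  by_contra htop
  have hstrict (k : ℕ) (hk : k ≤ m) : ¬ V ^ (k + 1) ≤ V ^ k := fun hle =>
    htop <| eq_top_mono (pow_le_pow_right' hone hk) (pow_eq_top_of_pow_succ_le hone hgen hle)
  have : Nontrivial A := not_subsingleton_iff_nontrivial.1 fun _ => htop (Subsingleton.elim _ _)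
  obtain ⟨k, hkm, hcov⟩ := exists_covBy_pow_of_finrank_le
    (fun k hk => (pow_le_pow_right' hone k.le_succ).lt_of_not_ge (hstrict k hk.le)) hdim
  obtain ⟨x, hx, hxk⟩ := exists_sup_span_pow_eq_of_covBy hcov (hstrict (k + 1) hkm)
  have hxm : V ^ (m + 1) ≤ V ^ m ⊔ Submodule.span F {x ^ (m + 1)} :=
    pow_succ_le_sup_span_pow_of_le hx hxk.ge hkm.le
  refine hstrict m le_rfl (hxm.trans (sup_le le_rfl ?_))
  rw [Submodule.span_singleton_le_iff_mem]
  exact pow_mem_pow_of_natDegree_minpoly_le hone hx (Algebra.IsIntegral.isIntegral x) (hdeg x) _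

end LengthBound

section TwoInvolutions

open scoped Pointwise

-- Multiplying by `s` or `t` moves only the two longest alternating words out of the ball.
theorem exists_pow_succ_subset_pow_union_pair {M : Type*} [Monoid M] [DecidableEq M] {s t : M}
    (hs : s * s = 1) (ht : t * t = 1) (k : ℕ) :
    ∃ p q : M, ({1, s, t} : Finset M) ^ (k + 1) ⊆ {1, s, t} ^ k ∪ {p, q} ∧
      s * p ∈ ({1, s, t} : Finset M) ^ k ∧ t * q ∈ ({1, s, t} : Finset M) ^ k := by
  set B : Finset M := {1, s, t} with hB
  have hmul (g : M) (hg : g ∈ B) (k : ℕ) (b : M) (hb : b ∈ B ^ k) : g * b ∈ B ^ (k + 1) :=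
    pow_succ' B k ▸ Finset.mul_mem_mul hg hb
  induction k with
  | zero =>
    refine ⟨s, t, ?_, ?_, ?_⟩
    all_goals simp [hB, hs, ht, Finset.insert_subset_iff]
  | succ k ih =>
    obtain ⟨p, q, hsub, hp, hq⟩ := ih
    have hmono (j : ℕ) : B ^ j ⊆ B ^ (j + 1) := fun b hb => one_mul b ▸ hmul 1 (by simp [hB]) j b hb
    have hpB : p ∈ B ^ (k + 1) := by
      simpa [← mul_assoc, hs] using hmul s (by simp [hB]) k _ hp
    have hqB : q ∈ B ^ (k + 1) := by
      simpa [← mul_assoc, ht] using hmul t (by simp [hB]) k _ hq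
    refine ⟨s * q, t * p, fun x hx => ?_, by simpa [← mul_assoc, hs] using hqB,
      by simpa [← mul_assoc, ht] using hpB⟩
    rw [pow_succ', Finset.mem_mul] at hx
    obtain ⟨g, hg, b, hb, rfl⟩ := hx
    rcases Finset.mem_union.1 (hsub hb) with hbk | hbpq
    · exact Finset.mem_union_left _ (hmul g hg k b hbk)
    · have hsp := hmono k hp
      have htq := hmono k hq
      simp only [hB, Finset.mem_insert, Finset.mem_singleton] at hg hbpq
      rcases hg with rfl | rfl | rfl <;> rcases hbpq with rfl | rfl <;>
        simp [hpB, hqB, hsp, htq]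

theorem card_insert_one_pair_pow_le {M : Type*} [Monoid M] [DecidableEq M] {s t : M}
    (hs : s * s = 1) (ht : t * t = 1) (k : ℕ) :
    (({1, s, t} : Finset M) ^ k).card ≤ 2 * k + 1 := by
  induction k with
  | zero => simp
  | succ k ih =>
    obtain ⟨p, q, hsub, -, -⟩ := exists_pow_succ_subset_pow_union_pair hs ht k
    calc (({1, s, t} : Finset M) ^ (k + 1)).card
        ≤ (({1, s, t} : Finset M) ^ k).card + ({p, q} : Finset M).card :=
          (Finset.card_le_card hsub).trans (Finset.card_union_le _ _)
      _ ≤ 2 * k + 1 + 2 := add_le_add ih Finset.card_le_two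
      _ = 2 * (k + 1) + 1 := by ring

theorem finrank_Lk_pair_le {F A : Type*} [Field F] [Ring A] [Algebra F A] {s t : A}
    (hs : s * s = 1) (ht : t * t = 1) (k : ℕ) :
    Module.finrank F (Lk F {s, t} k) ≤ 2 * k + 1 := by
  classical
  have hspan : Lk F {s, t} k = Submodule.span F (({1, s, t} : Finset A) ^ k : Finset A) := by
    rw [Lk, Submodule.span_pow, Set.singleton_union, Finset.coe_pow]
    simp only [Finset.coe_insert, Finset.coe_singleton]
  rw [hspan]
  exact (finrank_span_finset_le_card _).trans (card_insert_one_pair_pow_le hs ht k)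

end TwoInvolutions

section MinpolyBound

variable {F A : Type*} [Field F] [Ring A] [Algebra F A]

theorem natDegree_minpoly_le_finrank_of_pow_mem {x : A} {W : Submodule F A}
    [FiniteDimensional F W] (hpow : ∀ j : ℕ, x ^ j ∈ W) :
    (minpoly F x).natDegree ≤ Module.finrank F W := by
  have hli : LinearIndependent F
      fun i : Fin (minpoly F x).natDegree => (⟨x ^ (i : ℕ), hpow i⟩ : W) :=
    LinearIndependent.of_comp W.subtype (linearIndependent_pow x)
  simpa using hli.fintype_card_le_finrank

theorem natDegree_minpoly_le_two_mul_finrank {Z : Subalgebra F A} [FiniteDimensional F Z]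
    {x t c : A} (ht : t ∈ Z) (hc : c ∈ Z) (hx : x * x = t * x + c) :
    (minpoly F x).natDegree ≤ 2 * Module.finrank F Z := by
  let Z' : Submodule F A := Subalgebra.toSubmodule Z
  let Zx : Submodule F A := Z'.map (LinearMap.mulRight F x)
  have : FiniteDimensional F Z' := inferInstanceAs (FiniteDimensional F Z)
  have hpow (j : ℕ) : x ^ j ∈ Z' ⊔ Zx := by
    induction j with
    | zero => exact Submodule.mem_sup_left (pow_zero x ▸ Z.one_mem)
    | succ j ih =>
      obtain ⟨u, hu, _, ⟨v, hv, rfl⟩, huv⟩ := Submodule.mem_sup.1 ih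
      have hsucc : x ^ (j + 1) = v * c + (u + v * t) * x := by
        rw [pow_succ, ← huv, LinearMap.mulRight_apply, add_mul, mul_assoc, hx]
        noncomm_ring
      rw [hsucc]
      exact Submodule.add_mem_sup (Z.mul_mem hv hc)
        ⟨u + v * t, Z.add_mem hu (Z.mul_mem hv ht), rfl⟩
  calc (minpoly F x).natDegree ≤ Module.finrank F ↥(Z' ⊔ Zx) :=
        natDegree_minpoly_le_finrank_of_pow_mem hpow
    _ ≤ Module.finrank F Z' + Module.finrank F Zx :=
        Submodule.finrank_add_le_finrank_add_finrank Z' Zx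
    _ ≤ Module.finrank F Z' + Module.finrank F Z' := by
        gcongr; exact Submodule.finrank_map_le _ _
    _ = 2 * Module.finrank F Z := (two_mul _).symm

-- Cayley–Hamilton for `x = p + q * b`, whose trace is `p + σ p` and norm `p * σ p - q * σ q`.
theorem add_mul_involution_mul_self {R B : Type*} [CommRing R] [Ring B] (φ : R →+* B)
    (σ : R →+* R) {b : B} (hb : b * b = 1) (hcomm : ∀ p, b * φ p = φ (σ p) * b) (p q : R) :
    (φ p + φ q * b) * (φ p + φ q * b) =
      φ (p + σ p) * (φ p + φ q * b) + φ (q * σ q - p * σ p) := by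
  have hqq : φ q * b * (φ q * b) = φ (q * σ q) :=
    calc φ q * b * (φ q * b) = φ q * (b * φ q) * b := by noncomm_ring
      _ = φ (q * σ q) := by rw [hcomm, map_mul]; simp only [mul_assoc, hb, mul_one]
  have hqp : φ q * b * φ p = φ (σ p) * (φ q * b) := by
    rw [mul_assoc, hcomm, ← mul_assoc, ← mul_assoc, ← map_mul, ← map_mul, mul_comm]
  have hpp : φ p * φ p = φ (p + σ p) * φ p - φ (p * σ p) := by
    rw [← map_mul, ← map_mul, ← map_sub]; congr 1; ring
  rw [add_mul, mul_add, mul_add, hqq, hqp, hpp, map_sub, map_add]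
  noncomm_ring

end MinpolyBound

section SymmetricElements

variable (R G : Type*) [CommSemiring R] [CommGroup G]

/-- The involution `g ↦ g⁻¹` of the group algebra of a commutative group. On the rotations of a
dihedral group it is conjugation by a reflection. -/
noncomputable def groupInversion : MonoidAlgebra R G ≃ₐ[R] MonoidAlgebra R G :=
  MonoidAlgebra.domCongr R R (MulEquiv.inv G)

/-- The subalgebra of elements of the group algebra that are invariant under `g ↦ g⁻¹`. It
contains the traces and norms `p + σ p` and `p * σ p` of all `p`, where `σ` is
`groupInversion`. -/
noncomputable def symmetricElements : Subalgebra R (MonoidAlgebra R G) :=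
  AlgHom.equalizer (groupInversion R G : MonoidAlgebra R G →ₐ[R] MonoidAlgebra R G) (AlgHom.id R _)

variable {R G}

theorem groupInversion_groupInversion (p : MonoidAlgebra R G) :
    groupInversion R G (groupInversion R G p) = p := by
  ext; simp [groupInversion]

theorem mem_symmetricElements {p : MonoidAlgebra R G} :
    p ∈ symmetricElements R G ↔ groupInversion R G p = p := Iff.rfl

theorem coeff_inv_of_mem_symmetricElements {p : MonoidAlgebra R G}
    (hp : p ∈ symmetricElements R G) (g : G) : p.coeff g⁻¹ = p.coeff g := by
  conv_rhs => rw [← mem_symmetricElements.1 hp]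
  simp [groupInversion]

theorem add_groupInversion_mem_symmetricElements (p : MonoidAlgebra R G) :
    p + groupInversion R G p ∈ symmetricElements R G := by
  rw [mem_symmetricElements, map_add, groupInversion_groupInversion, add_comm]

theorem mul_groupInversion_mem_symmetricElements (p : MonoidAlgebra R G) :
    p * groupInversion R G p ∈ symmetricElements R G := by
  rw [mem_symmetricElements, map_mul, groupInversion_groupInversion, mul_comm]

theorem finrank_symmetricElements_zmod_le (R : Type*) [CommRing R] [Nontrivial R] (n : ℕ)
    [NeZero n] :
    Module.finrank R (symmetricElements R (Multiplicative (ZMod n))) ≤ n / 2 + 1 := by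
  let ev : symmetricElements R (Multiplicative (ZMod n)) →ₗ[R] (Fin (n / 2 + 1) → R) :=
    { toFun := fun p i => p.1.coeff (Multiplicative.ofAdd ((i : ℕ) : ZMod n))
      map_add' := fun _ _ => rfl
      map_smul' := fun _ _ => rfl }
  have hinj : Function.Injective ev := by
    rw [injective_iff_map_eq_zero]
    rintro ⟨p, hp⟩ hev
    have hsmall (k : ℕ) (hk : k ≤ n / 2) :
        p.coeff (Multiplicative.ofAdd (k : ZMod n)) = 0 :=
      congrFun hev ⟨k, by omega⟩
    refine Subtype.ext ?_
    change p = 0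
    ext g
    induction g using Multiplicative.rec with | ofAdd j
    by_cases hj : j.val ≤ n / 2
    · simpa using hsmall _ hj
    · have hneg := hsmall (n - j.val) (by omega)
      rw [Nat.cast_sub (ZMod.val_lt j).le, ZMod.natCast_self, zero_sub, ZMod.natCast_zmod_val,
        ofAdd_neg, coeff_inv_of_mem_symmetricElements hp] at hneg
      exact hneg
  simpa using LinearMap.finrank_le_finrank_of_injective hinj

end SymmetricElements

theorem adjoin_image_of_eq_top_of_closure_eq_top {R M : Type*} [CommSemiring R] [Monoid M]
    {T : Set M} (hT : Submonoid.closure T = ⊤) :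
    Algebra.adjoin R (MonoidAlgebra.of R M '' T) = ⊤ := by
  have hof : ⊤ ≤ (Algebra.adjoin R (MonoidAlgebra.of R M '' T)).toSubmonoid.comap
      (MonoidAlgebra.of R M) :=
    hT ▸ Submonoid.closure_le.2 fun g hg => Algebra.subset_adjoin ⟨g, hg, rfl⟩
  refine eq_top_iff.2 fun x _ => Algebra.adjoin_le ?_ (MonoidAlgebra.mem_adjoin_support x)
  rintro _ ⟨g, -, rfl⟩
  exact hof (Submonoid.mem_top g)

section DihedralGroupAlgebra

variable (R : Type*) [CommSemiring R] (n : ℕ)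

/-- The inclusion of the group algebra of the rotation subgroup into that of the dihedral group. The
rotations are encoded as `Multiplicative (ZMod n)`. -/
noncomputable def rotationHom :
    MonoidAlgebra R (Multiplicative (ZMod n)) →ₐ[R] MonoidAlgebra R (DihedralGroup n) :=
  MonoidAlgebra.mapDomainAlgHom R R
    { toFun := fun i => DihedralGroup.r i.toAdd
      map_one' := rfl
      map_mul' := fun _ _ => rfl }

variable {R n}

theorem rotationHom_single (g : Multiplicative (ZMod n)) (c : R) :
    rotationHom R n (MonoidAlgebra.single g c) =
      MonoidAlgebra.single (DihedralGroup.r g.toAdd) c := by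
  simp [rotationHom]
  rfl

theorem reflection_mul_rotationHom (p : MonoidAlgebra R (Multiplicative (ZMod n))) :
    MonoidAlgebra.single (DihedralGroup.sr 0) 1 * rotationHom R n p =
      rotationHom R n (groupInversion R _ p) * MonoidAlgebra.single (DihedralGroup.sr 0) 1 := by
  induction p using MonoidAlgebra.induction_linear with
  | zero => simp
  | add p q hp hq => simp only [map_add, mul_add, add_mul, hp, hq]
  | single g c => simp [groupInversion, rotationHom_single, MonoidAlgebra.single_mul_single]

theorem exists_eq_rotationHom_add_rotationHom_mul (x : MonoidAlgebra R (DihedralGroup n)) :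
    ∃ p q, x =
      rotationHom R n p + rotationHom R n q * MonoidAlgebra.single (DihedralGroup.sr 0) 1 := by
  induction x using MonoidAlgebra.induction_linear with
  | zero => exact ⟨0, 0, by simp⟩
  | add x y hx hy =>
    obtain ⟨p, q, rfl⟩ := hx
    obtain ⟨p', q', rfl⟩ := hy
    exact ⟨p + p', q + q', by simp only [map_add, add_mul]; abel⟩
  | single g c =>
    cases g with
    | r i =>
      exact ⟨MonoidAlgebra.single (Multiplicative.ofAdd i) c, 0, by simp [rotationHom_single]⟩
    | sr i =>
      refine ⟨0, MonoidAlgebra.single (Multiplicative.ofAdd (-i)) c, ?_⟩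
      simp [rotationHom_single, MonoidAlgebra.single_mul_single]

theorem natDegree_minpoly_dihedral_le {F : Type*} [Field F] [NeZero n]
    (x : MonoidAlgebra F (DihedralGroup n)) :
    (minpoly F x).natDegree ≤ 2 * (n / 2 + 1) := by
  obtain ⟨p, q, rfl⟩ := exists_eq_rotationHom_add_rotationHom_mul x
  let C := symmetricElements F (Multiplicative (ZMod n))
  have hsq : (MonoidAlgebra.single (DihedralGroup.sr 0) 1 : MonoidAlgebra F (DihedralGroup n)) *
      MonoidAlgebra.single (DihedralGroup.sr 0) 1 = 1 := by
    simp [MonoidAlgebra.single_mul_single, MonoidAlgebra.one_def]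
  have hquad := add_mul_involution_mul_self (rotationHom F n).toRingHom
    (groupInversion F (Multiplicative (ZMod n))).toRingEquiv.toRingHom hsq
    reflection_mul_rotationHom p q
  calc (minpoly F _).natDegree ≤ 2 * Module.finrank F (C.map (rotationHom F n)) :=
        natDegree_minpoly_le_two_mul_finrank (Z := C.map (rotationHom F n))
          ⟨_, add_groupInversion_mem_symmetricElements p, rfl⟩
          ⟨_, C.sub_mem (mul_groupInversion_mem_symmetricElements q)
            (mul_groupInversion_mem_symmetricElements p), rfl⟩ hquad
    _ ≤ 2 * Module.finrank F C := by
        gcongr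
        exact Submodule.finrank_map_le (rotationHom F n).toLinearMap (Subalgebra.toSubmodule C)
    _ ≤ 2 * (n / 2 + 1) := by gcongr; exact finrank_symmetricElements_zmod_le F n

theorem finrank_monoidAlgebra_dihedral (R : Type*) [CommRing R] [Nontrivial R] (n : ℕ) :
    Module.finrank R (MonoidAlgebra R (DihedralGroup n)) = 2 * n := by
  rw [Module.finrank_eq_nat_card_basis (MonoidAlgebra.basis (DihedralGroup n) R),
    DihedralGroup.nat_card]

theorem Lk_dihedral_eq_top {F : Type*} [Field F] [NeZero n]
    {S : Set (MonoidAlgebra F (DihedralGroup n))} (hS : Algebra.adjoin F S = ⊤) :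
    Lk F S (2 * (n / 2) + 1) = ⊤ := by
  refine Lk_eq_top_of_natDegree_minpoly_le hS ?_ natDegree_minpoly_dihedral_le
  rw [finrank_monoidAlgebra_dihedral]
  omega

theorem closure_sr_zero_sr_one_eq_top (n : ℕ) :
    Submonoid.closure {DihedralGroup.sr 0, DihedralGroup.sr (1 : ZMod n)} = ⊤ := by
  set H := Submonoid.closure {DihedralGroup.sr 0, DihedralGroup.sr (1 : ZMod n)}
  have hsr0 : DihedralGroup.sr 0 ∈ H := Submonoid.subset_closure (by simp)
  have hsr1 : DihedralGroup.sr 1 ∈ H := Submonoid.subset_closure (by simp)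
  have hr (i : ZMod n) : DihedralGroup.r i ∈ H := by
    obtain ⟨j, rfl⟩ := ZMod.intCast_surjective i
    induction j using Int.induction_on with
    | zero => simp
    | succ j ih =>
      simpa [add_comm] using H.mul_mem ih (H.mul_mem hsr0 hsr1)
    | pred j ih =>
      simpa [sub_eq_add_neg, add_comm] using H.mul_mem ih (H.mul_mem hsr1 hsr0)
  refine eq_top_iff.2 fun g _ => ?_
  cases g with
  | r i => exact hr i
  | sr i => simpa using H.mul_mem hsr0 (hr i)

end DihedralGroupAlgebra

-- The division is rounded down: for odd `n` both bounds are `n`.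
theorem stmt_13_general (F : Type*) [Field F] (n : ℕ) [NeZero n] :
    (∀ S : Set (MonoidAlgebra F (DihedralGroup n)),
        Algebra.adjoin F S = ⊤ → lenS F S ≤ 2 * (n / 2) + 1) ∧
    ∃ S : Set (MonoidAlgebra F (DihedralGroup n)),
        Algebra.adjoin F S = ⊤ ∧ n ≤ lenS F S := by
  refine ⟨fun S hS => Nat.sInf_le (Lk_dihedral_eq_top hS), ?_⟩
  let of := MonoidAlgebra.of F (DihedralGroup n)
  let S : Set (MonoidAlgebra F (DihedralGroup n)) :=
    {of (DihedralGroup.sr 0), of (DihedralGroup.sr 1)}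
  have hinvolution (i : ZMod n) : of (DihedralGroup.sr i) * of (DihedralGroup.sr i) = 1 := by
    rw [← map_mul, DihedralGroup.sr_mul_self, map_one]
  have hS : Algebra.adjoin F S = ⊤ := by
    simpa only [Set.image_pair] using
      adjoin_image_of_eq_top_of_closure_eq_top (R := F) (closure_sr_zero_sr_one_eq_top n)
  have hlen : Lk F S (lenS F S) = ⊤ :=
    Nat.sInf_mem (s := {k | Lk F S k = ⊤}) ⟨_, Lk_dihedral_eq_top hS⟩
  have hdim : Module.finrank F (Lk F S (lenS F S)) ≤ 2 * lenS F S + 1 :=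
    finrank_Lk_pair_le (hinvolution 0) (hinvolution 1) _
  rw [hlen, finrank_top, finrank_monoidAlgebra_dihedral] at hdim
  exact ⟨S, hS, by omega⟩

theorem stmt_13 (F : Type*) [Field F] (n : ℕ) (hn : 4 ≤ n) (heven : Even n) :
    (∀ S : Set (MonoidAlgebra F (DihedralGroup n)),
        Algebra.adjoin F S = ⊤ → lenS F S ≤ n + 1) ∧
    ∃ S : Set (MonoidAlgebra F (DihedralGroup n)),
        Algebra.adjoin F S = ⊤ ∧ n ≤ lenS F S := by
  have : NeZero n := ⟨by omega⟩
  simpa only [Nat.two_mul_div_two_of_even heven] using stmt_13_general F n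
end
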